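/- Let C ∈ 𝕊ⁿ₊ with rank r, let 0 < t ≤ r and t ≤ s < n. Then the spectral upper bound Σ_{ℓ=1}^t log(λ_ℓ(C)) plus t·log(s/t) is an upper bound on the generalized factorization bound; i.e., there exists a feasible solution of the convex program DGFact — minimize −Σ_{ℓ=k−t+1}^k log(λ_ℓ(Θ)) + νᵀ𝟙 + τs − t subject to diag(F Θ Fᵀ) + υ − ν − τ𝟙 = 0, Θ ≻ 0, υ ≥ 0, ν ≥ 0 — whose objective value equals Σ_{ℓ=1}^t log(λ_ℓ(C)) + t·log(s/t). In particular, z_DGFact(C,s,t;F) − Σ_{ℓ=1}^t log(λ_ℓ(C)) ≤ t·log(s/t). -/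

import Mathlib

/-- `descEig W i` is the `(i+1)`-th greatest eigenvalue of the real symmetric matrix `W`
(junk value `0` if `W` is not symmetric). -/
noncomputable def descEig {k : ℕ} (W : Matrix (Fin k) (Fin k) ℝ) : Fin k → ℝ :=
  fun i => if h : W.IsHermitian then (h.eigenvalues ∘ Tuple.sort h.eigenvalues) i.rev else 0

lemma aux_antitone {k : ℕ} (W : Matrix (Fin k) (Fin k) ℝ) : Antitone (descEig W) := by
  intro i j hij
  unfold descEig
  split_ifs with h
  · exact Tuple.monotone_sort h.eigenvalues (Fin.rev_le_rev.mpr hij)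
  · exact le_rfl

lemma aux_perm {k : ℕ} {W : Matrix (Fin k) (Fin k) ℝ} (h : W.IsHermitian) :
    ∃ e : Equiv.Perm (Fin k), descEig W = h.eigenvalues ∘ e := by
  refine ⟨Fin.revPerm.trans (Tuple.sort h.eigenvalues), ?_⟩
  funext i
  unfold descEig
  rw [dif_pos h]
  rfl

open Polynomial in
lemma aux_charpoly {k : ℕ} {W : Matrix (Fin k) (Fin k) ℝ} (h : W.IsHermitian) :
    W.charpoly = ∏ i, (X - C (descEig W i)) := by
  obtain ⟨e, he⟩ := aux_perm h
  rw [h.charpoly_eq, he]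
  exact (Equiv.prod_comp e (fun i => (X - C (h.eigenvalues i)))).symm

open Polynomial in
lemma aux_unique {k : ℕ} {W : Matrix (Fin k) (Fin k) ℝ} (h : W.IsHermitian) (f : Fin k → ℝ)
    (hf : Antitone f) (hW : W.charpoly = ∏ i, (X - C (f i))) : descEig W = f := by
  have hroots : ∀ g : Fin k → ℝ, (∏ i, (X - C (g i))).roots = Multiset.map g Finset.univ.val := by
    intro g
    rw [Polynomial.roots_prod]
    · simp
    · simp [Finset.prod_ne_zero_iff, Polynomial.X_sub_C_ne_zero]
  have h1 := aux_charpoly h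
  rw [hW] at h1
  have h2 : Multiset.map f Finset.univ.val = Multiset.map (descEig W) Finset.univ.val := by
    rw [← hroots, ← hroots, h1]
  rw [Fin.univ_val_map, Fin.univ_val_map, Multiset.coe_eq_coe] at h2
  have h3 := List.Perm.eq_of_sortedGE hf.sortedGE_ofFn (aux_antitone W).sortedGE_ofFn h2
  exact (List.ofFn_injective h3).symm

lemma aux_spectral {k : ℕ} {W : Matrix (Fin k) (Fin k) ℝ} (h : W.IsHermitian) :
    ∃ U : Matrix (Fin k) (Fin k) ℝ, U * U.transpose = 1 ∧ U.transpose * U = 1 ∧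
      W = U * Matrix.diagonal (descEig W) * U.transpose := by
  obtain ⟨e, he⟩ := aux_perm h
  set V : Matrix (Fin k) (Fin k) ℝ := (h.eigenvectorUnitary).1 with hV
  have hst : star V = V.transpose := by
    rw [Matrix.star_eq_conjTranspose, Matrix.conjTranspose_eq_transpose_of_trivial]
  have hV1 : V * V.transpose = 1 := by rw [← hst]; exact Unitary.coe_mul_star_self _
  have hV2 : V.transpose * V = 1 := by rw [← hst]; exact Unitary.coe_star_mul_self _
  have hs := h.spectral_theorem
  rw [Unitary.conjStarAlgAut_apply] at hs
  have hs' : W = V * Matrix.diagonal h.eigenvalues * V.transpose := by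
    rw [← hst]; exact hs
  refine ⟨V.submatrix id e, ?_, ?_, ?_⟩
  · rw [Matrix.transpose_submatrix, Matrix.submatrix_mul_equiv, hV1]; simp
  · rw [Matrix.transpose_submatrix, ← Matrix.submatrix_mul _ _ _ _ _ Function.bijective_id, hV2]; simp
  · conv_lhs => rw [hs']
    rw [he]
    have : Matrix.diagonal (h.eigenvalues ∘ e) = (Matrix.diagonal h.eigenvalues).submatrix e e := by
      simp
    rw [this, Matrix.submatrix_mul_equiv, Matrix.transpose_submatrix, Matrix.submatrix_mul_equiv]
    simp

open Polynomial in
lemma aux_charpoly_conj {k : ℕ} (U : Matrix (Fin k) (Fin k) ℝ) (h2 : U.transpose * U = 1)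
    (d : Fin k → ℝ) :
    (U * Matrix.diagonal d * U.transpose).charpoly = ∏ i, (X - C (d i)) := by
  rw [Matrix.charpoly_mul_comm, ← mul_assoc, h2, one_mul, Matrix.charpoly_diagonal]

lemma aux_nonneg {k : ℕ} {W : Matrix (Fin k) (Fin k) ℝ} (h : W.PosSemidef) (i : Fin k) :
    0 ≤ descEig W i := by
  obtain ⟨e, he⟩ := aux_perm h.1
  rw [he]; exact h.eigenvalues_nonneg _

lemma aux_pos {k : ℕ} {W : Matrix (Fin k) (Fin k) ℝ} (h : W.PosDef) (i : Fin k) :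
    0 < descEig W i := by
  obtain ⟨e, he⟩ := aux_perm h.1
  rw [he]; exact h.eigenvalues_pos _

lemma aux_rank {k : ℕ} {W : Matrix (Fin k) (Fin k) ℝ} (h : W.PosSemidef) (i : Fin k) :
    0 < descEig W i ↔ (i : ℕ) < W.rank := by
  obtain ⟨e, he⟩ := aux_perm h.1
  have h1 := Tuple.lt_card_gt_iff_apply_gt_of_antitone (f := descEig W) (a := 0) (j := i)
    (aux_antitone W)
  have h2 : W.rank = Finset.card {i | descEig W i > 0} := by
    rw [h.1.rank_eq_card_non_zero_eigs, ← Fintype.card_subtype]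
    refine (Fintype.card_congr (e.subtypeEquiv ?_)).symm
    intro a
    have := aux_nonneg h a
    rw [he] at this ⊢
    exact ⟨fun h => ne_of_gt h, fun h => lt_of_le_of_ne this (Ne.symm h)⟩
  rw [h2]
  exact h1.symm

open Polynomial in
lemma aux_append {k d : ℕ} (F : Matrix (Fin (k + d)) (Fin k) ℝ) :
    descEig (F * F.transpose) = Fin.append (descEig (F.transpose * F)) (fun _ => 0) := by
  have hG : (F.transpose * F).PosSemidef := by
    simpa using Matrix.posSemidef_conjTranspose_mul_self F
  have hC : (F * F.transpose).PosSemidef := by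
    simpa using Matrix.posSemidef_self_mul_conjTranspose F
  apply aux_unique hC.1
  · intro i j hij
    induction i using Fin.addCases with
    | left i =>
      induction j using Fin.addCases with
      | left j =>
        simp only [Fin.append_left]
        exact aux_antitone _ (show (i : ℕ) ≤ (j : ℕ) from hij)
      | right j => simpa using aux_nonneg hG i
    | right i =>
      induction j using Fin.addCases with
      | left j =>
        exfalso
        have : k + (i : ℕ) ≤ (j : ℕ) := by simpa [Fin.le_def] using hij
        omega
      | right j => simp
  · rw [Matrix.charpoly_mul_comm_of_le _ _ (by simp), aux_charpoly hG.1, Fin.prod_univ_add]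
    simp [mul_comm]

lemma aux_diag {n k : ℕ} (F : Matrix (Fin n) (Fin k) ℝ) (U : Matrix (Fin k) (Fin k) ℝ)
    (lam θ : Fin k → ℝ) (a : ℝ) (ha : 0 ≤ a) (h2 : U.transpose * U = 1)
    (hG : F.transpose * F = U * Matrix.diagonal lam * U.transpose)
    (hθ : ∀ i, lam i ≠ 0 → θ i = a * (lam i)⁻¹) (j : Fin n) :
    (F * (U * Matrix.diagonal θ * U.transpose) * F.transpose) j j ≤ a := by
  set H := F * U with hH
  have hHH : H.transpose * H = Matrix.diagonal lam := by
    rw [hH, Matrix.transpose_mul]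
    calc U.transpose * F.transpose * (F * U) = U.transpose * (F.transpose * F) * U := by
          simp only [Matrix.mul_assoc]
      _ = (U.transpose * U) * Matrix.diagonal lam * (U.transpose * U) := by
          rw [hG]; simp only [Matrix.mul_assoc]
      _ = _ := by rw [h2]; simp
  have hz : ∀ i, lam i = 0 → ∀ l, H l i = 0 := by
    intro i hi l
    have := congrFun (congrFun hHH i) i
    rw [Matrix.mul_apply, Matrix.diagonal_apply_eq, hi] at this
    have h3 := (Finset.sum_eq_zero_iff_of_nonneg (by
      intro x _; rw [Matrix.transpose_apply]; exact mul_self_nonneg _)).1 this l (Finset.mem_univ _)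
    rw [Matrix.transpose_apply] at h3
    exact mul_self_eq_zero.1 h3
  set B := H * Matrix.diagonal (fun i => (lam i)⁻¹) * H.transpose with hB
  have hBB : B * B = B := by
    have : Matrix.diagonal (fun i => (lam i)⁻¹) * Matrix.diagonal lam *
        Matrix.diagonal (fun i => (lam i)⁻¹) = Matrix.diagonal (fun i => (lam i)⁻¹) := by
      rw [Matrix.diagonal_mul_diagonal, Matrix.diagonal_mul_diagonal]
      congr 1; funext i
      by_cases h : lam i = 0
      · simp [h]
      · field_simp
    calc B * B = H * (Matrix.diagonal (fun i => (lam i)⁻¹) * (H.transpose * H) *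
        Matrix.diagonal (fun i => (lam i)⁻¹)) * H.transpose := by
          rw [hB]; simp only [Matrix.mul_assoc]
      _ = B := by rw [hHH, this]
  have hBs : B.transpose = B := by
    rw [hB]; simp [Matrix.transpose_mul, Matrix.mul_assoc]
  have hBle : B j j ≤ 1 := by
    have h1 : B j j = ∑ l, B j l * B j l := by
      conv_lhs => rw [← hBB, Matrix.mul_apply]
      refine Finset.sum_congr rfl fun l _ => ?_
      rw [← congrFun (congrFun hBs j) l, Matrix.transpose_apply]
    have h3 : B j j * B j j ≤ ∑ l, B j l * B j l :=
      Finset.single_le_sum (f := fun l => B j l * B j l)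
        (fun l _ => mul_self_nonneg _) (Finset.mem_univ j)
    nlinarith
  have hE : (F * (U * Matrix.diagonal θ * U.transpose) * F.transpose) = 
      H * Matrix.diagonal θ * H.transpose := by
    rw [hH, Matrix.transpose_mul]; simp only [Matrix.mul_assoc]
  have hEB : (H * Matrix.diagonal θ * H.transpose) j j = a * B j j := by
    rw [hB, Matrix.mul_apply, Matrix.mul_apply, Finset.mul_sum]
    refine Finset.sum_congr rfl fun i _ => ?_
    rw [Matrix.mul_diagonal, Matrix.mul_diagonal, Matrix.transpose_apply]
    by_cases h : lam i = 0
    · rw [hz i h]; simp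
    · rw [hθ i h]; ring
  rw [hE, hEB]
  nlinarith

lemma aux_trace {k r t : ℕ} (ht : 0 < t) (htr : t ≤ r) (hrk : r ≤ k)
    (V G : Matrix (Fin k) (Fin k) ℝ) (hV : V.PosDef) (hG : G.PosSemidef)
    (i0 j0 : Fin k) (hi0 : (i0 : ℕ) = k - t) (hj0 : (j0 : ℕ) = r - 1) :
    descEig G j0 * descEig V i0 ≤ (V * G).trace := by
  obtain ⟨P, hP1, hP2, hP⟩ := aux_spectral hV.1
  obtain ⟨Q, hQ1, hQ2, hQ⟩ := aux_spectral hG.1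
  set d := descEig V with hd
  set l := descEig G with hl
  have hdpos : ∀ i, 0 < d i := aux_pos hV
  have hlnn : ∀ i, 0 ≤ l i := aux_nonneg hG
  set O := P.transpose * Q with hO
  have hO1 : O * O.transpose = 1 := by
    rw [hO, Matrix.transpose_mul, Matrix.transpose_transpose]
    calc P.transpose * Q * (Q.transpose * P) = P.transpose * (Q * Q.transpose) * P := by
          simp only [Matrix.mul_assoc]
      _ = 1 := by rw [hQ1, Matrix.mul_one, hP2]
  have hO2 : O.transpose * O = 1 := by
    rw [hO, Matrix.transpose_mul, Matrix.transpose_transpose]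
    calc Q.transpose * P * (P.transpose * Q) = Q.transpose * (P * P.transpose) * Q := by
          simp only [Matrix.mul_assoc]
      _ = 1 := by rw [hP1, Matrix.mul_one, hQ2]
  have hrow : ∀ i, ∑ j, O i j ^ 2 = 1 := by
    intro i
    have := congrFun (congrFun hO1 i) i
    rw [Matrix.mul_apply, Matrix.one_apply_eq] at this
    rw [← this]
    exact Finset.sum_congr rfl fun j _ => by rw [Matrix.transpose_apply, sq]
  have hcol : ∀ j, ∑ i, O i j ^ 2 = 1 := by
    intro i
    have := congrFun (congrFun hO2 i) i
    rw [Matrix.mul_apply, Matrix.one_apply_eq] at this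
    rw [← this]
    exact Finset.sum_congr rfl fun j _ => by rw [Matrix.transpose_apply, sq]
  have htrace : (V * G).trace = ∑ i, ∑ j, d i * l j * O i j ^ 2 := by
    have h1 : (V * G).trace =
        (Matrix.diagonal d * O * (Matrix.diagonal l * O.transpose)).trace := by
      calc (V * G).trace = ((P * Matrix.diagonal d * P.transpose) *
            (Q * Matrix.diagonal l * Q.transpose)).trace := by rw [← hP, ← hQ]
        _ = (P * (Matrix.diagonal d * O * Matrix.diagonal l * Q.transpose)).trace := by
          rw [hO]; simp only [Matrix.mul_assoc]
        _ = _ := by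
          rw [Matrix.trace_mul_comm, hO, Matrix.transpose_mul, Matrix.transpose_transpose]
          simp only [Matrix.mul_assoc]
    rw [h1, Matrix.trace]
    refine Finset.sum_congr rfl fun i _ => ?_
    rw [Matrix.diag_apply, Matrix.mul_apply]
    refine Finset.sum_congr rfl fun j _ => ?_
    rw [Matrix.diagonal_mul, Matrix.diagonal_mul, Matrix.transpose_apply]
    ring
  -- index sets
  set T : Finset (Fin k) := Finset.Iic i0 with hT
  set R : Finset (Fin k) := Finset.Iic j0 with hR
  have hRc : R.card = r := by rw [hR, Fin.card_Iic, hj0]; omega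
  have hTc : Tᶜ.card = t - 1 := by
    rw [Finset.card_compl, hT, Fin.card_Iic, hi0, Fintype.card_fin]; omega
  have hmass : 1 ≤ ∑ j ∈ R, ∑ i ∈ T, O i j ^ 2 := by
    have h1 : ∀ j, ∑ i ∈ T, O i j ^ 2 = 1 - ∑ i ∈ Tᶜ, O i j ^ 2 := by
      intro j
      rw [← hcol j, ← Finset.sum_add_sum_compl T]; ring
    have h2 : ∑ j ∈ R, ∑ i ∈ Tᶜ, O i j ^ 2 ≤ (t - 1 : ℕ) := by
      rw [Finset.sum_comm]
      calc ∑ i ∈ Tᶜ, ∑ j ∈ R, O i j ^ 2 ≤ ∑ i ∈ Tᶜ, (1 : ℝ) := by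
            refine Finset.sum_le_sum fun i _ => ?_
            rw [← hrow i]
            exact Finset.sum_le_univ_sum_of_nonneg fun j => sq_nonneg _
        _ = _ := by rw [Finset.sum_const, hTc]; simp
    simp_rw [h1]
    rw [Finset.sum_sub_distrib, Finset.sum_const, hRc]
    have : ((t - 1 : ℕ) : ℝ) + 1 ≤ r := by exact_mod_cast (by omega : t - 1 + 1 ≤ r)
    simp only [nsmul_eq_mul, mul_one]
    linarith
  have hnn : ∀ i j, 0 ≤ d i * l j * O i j ^ 2 := fun i j =>
    mul_nonneg (mul_nonneg (hdpos i).le (hlnn j)) (sq_nonneg _)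
  rw [htrace]
  calc l j0 * d i0 = l j0 * d i0 * 1 := by ring
    _ ≤ l j0 * d i0 * ∑ j ∈ R, ∑ i ∈ T, O i j ^ 2 :=
      mul_le_mul_of_nonneg_left hmass (mul_nonneg (hlnn _) (hdpos _).le)
    _ = ∑ i ∈ T, ∑ j ∈ R, d i0 * l j0 * O i j ^ 2 := by
      rw [Finset.sum_comm, Finset.mul_sum]
      refine Finset.sum_congr rfl fun i _ => ?_
      rw [Finset.mul_sum]
      exact Finset.sum_congr rfl fun j _ => by ring
    _ ≤ ∑ i ∈ T, ∑ j ∈ R, d i * l j * O i j ^ 2 := by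
      refine Finset.sum_le_sum fun i hi => Finset.sum_le_sum fun j hj => ?_
      refine mul_le_mul_of_nonneg_right ?_ (sq_nonneg _)
      exact mul_le_mul (aux_antitone V (Finset.mem_Iic.1 hi)) (aux_antitone G (Finset.mem_Iic.1 hj))
        (hlnn _) (hdpos _).le
    _ ≤ ∑ i ∈ T, ∑ j, d i * l j * O i j ^ 2 :=
      Finset.sum_le_sum fun i _ => Finset.sum_le_univ_sum_of_nonneg (hnn i)
    _ ≤ _ := Finset.sum_le_univ_sum_of_nonneg fun i => Finset.sum_nonneg fun j _ => hnn i j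

/-- For `C ∈ 𝕊ⁿ₊` of rank `r`, a factorization `C = F Fᵀ` with `F ∈ ℝ^{n×k}`, and
`0 < t ≤ r`, `t ≤ s < n`: there is a feasible solution of the convex program DGFact
(minimize `−∑_{ℓ=k−t+1}^k log λ_ℓ(Θ) + νᵀ𝟙 + τ·s − t` subject to
`diag(F Θ Fᵀ) + υ − ν − τ𝟙 = 0`, `Θ ≻ 0`, `υ ≥ 0`, `ν ≥ 0`) whose objective value
equals the spectral bound `∑_{ℓ=1}^t log λ_ℓ(C)` plus `t·log(s/t)`.  In particular,
`z_DGFact(C,s,t;F) − ∑_{ℓ=1}^t log λ_ℓ(C) ≤ t·log(s/t)`. -/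
theorem stmt_19 (n k r t s : ℕ)
    (hr : 0 < r) (hrk : r ≤ k) (hkn : k ≤ n) (ht : 0 < t) (htr : t ≤ r)
    (hts : t ≤ s) (hsn : s < n)
    (C : Matrix (Fin n) (Fin n) ℝ) (F : Matrix (Fin n) (Fin k) ℝ)
    (hC : C.PosSemidef) (hrank : C.rank = r) (hfact : C = F * F.transpose) :
    let obj : Matrix (Fin k) (Fin k) ℝ → (Fin n → ℝ) → ℝ → ℝ := fun Θ ν τ =>
      -(∑ i : Fin k, if k - t ≤ (i : ℕ) then Real.log (descEig Θ i) else 0)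
        + (∑ j, ν j) + τ * (s : ℝ) - (t : ℝ)
    let feas : Matrix (Fin k) (Fin k) ℝ → (Fin n → ℝ) → (Fin n → ℝ) → ℝ → Prop :=
      fun Θ υ ν τ =>
        Θ.PosDef ∧ (∀ j, 0 ≤ υ j) ∧ (∀ j, 0 ≤ ν j) ∧
          ∀ j : Fin n, (F * Θ * F.transpose) j j + υ j - ν j - τ = 0
    let RHS : ℝ :=
      (∑ i : Fin n, if (i : ℕ) < t then Real.log (descEig C i) else 0)
        + (t : ℝ) * Real.log ((s : ℝ) / t)
    (∃ (Θ : Matrix (Fin k) (Fin k) ℝ) (υ ν : Fin n → ℝ) (τ : ℝ),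
        feas Θ υ ν τ ∧ obj Θ ν τ = RHS) ∧
    sInf {z : ℝ | ∃ (Θ : Matrix (Fin k) (Fin k) ℝ) (υ ν : Fin n → ℝ) (τ : ℝ),
        feas Θ υ ν τ ∧ obj Θ ν τ = z} ≤ RHS := by
  intro obj feas RHS
  have hn0 : (0 : ℝ) < n := by exact_mod_cast (by omega : 0 < n)
  have ht0 : (0 : ℝ) < t := by exact_mod_cast ht
  have hs0 : (0 : ℝ) < s := by exact_mod_cast (by omega : 0 < s)
  have hG : (F.transpose * F).PosSemidef := by
    simpa using Matrix.posSemidef_conjTranspose_mul_self F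
  have hGr : (F.transpose * F).rank = r := by
    rw [Matrix.rank_transpose_mul_self, ← hrank, hfact, Matrix.rank_self_mul_transpose]
  set lam := descEig (F.transpose * F) with hlam
  have hlpos : ∀ i : Fin k, 0 < lam i ↔ (i : ℕ) < r := by
    intro i; rw [hlam, aux_rank hG, hGr]
  have hlanti : Antitone lam := aux_antitone _
  let j0 : Fin k := ⟨r - 1, by omega⟩
  let i0 : Fin k := ⟨k - t, by omega⟩
  have hj0 : 0 < lam j0 := (hlpos j0).2 (by show r - 1 < r; omega)
  have hex : ∃ (Θ : Matrix (Fin k) (Fin k) ℝ) (υ ν : Fin n → ℝ) (τ : ℝ),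
        feas Θ υ ν τ ∧ obj Θ ν τ = RHS := by
    obtain ⟨U, hU1, hU2, hU⟩ := aux_spectral hG.1
    let a : ℝ := (t : ℝ) / s
    have ha : 0 < a := div_pos ht0 hs0
    let θ : Fin k → ℝ := fun i => a * (lam (min i j0))⁻¹
    have hmin : ∀ i, 0 < lam (min i j0) := fun i => lt_of_lt_of_le hj0 (hlanti (min_le_right _ _))
    have hθpos : ∀ i, 0 < θ i := fun i => mul_pos ha (inv_pos.2 (hmin i))
    have hmini : ∀ i : Fin k, (i : ℕ) < r → min i j0 = i := by
      intro i hi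
      exact min_eq_left (show (i : ℕ) ≤ r - 1 by omega)
    let Θ := U * Matrix.diagonal θ * U.transpose
    have hΘ : Θ.PosDef := by
      have h1 : (Matrix.diagonal θ).PosDef := Matrix.PosDef.diagonal hθpos
      have h2 := h1.mul_mul_conjTranspose_same (B := U) (by
        intro x y hxy
        have h3 := congrArg (fun v => Matrix.vecMul v U.transpose) hxy
        simpa [Matrix.vecMul_vecMul, hU1] using h3)
      simpa [Θ] using h2
    have hθmono : Monotone θ := by
      intro i j hij
      refine mul_le_mul_of_nonneg_left ?_ ha.le
      exact inv_anti₀ (hmin j) (hlanti (min_le_min_right _ hij))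
    have hdΘ : descEig Θ = fun i => θ i.rev := by
      apply aux_unique hΘ.1
      · intro i j hij
        exact hθmono (Fin.rev_le_rev.2 hij)
      · rw [aux_charpoly_conj U hU2]
        exact (Equiv.prod_comp Fin.revPerm
          (fun i => (Polynomial.X - Polynomial.C (θ i)))).symm
    refine ⟨Θ, fun j => a - (F * Θ * F.transpose) j j, fun _ => 0, a,
      ⟨hΘ, ?_, fun _ => le_rfl, ?_⟩, ?_⟩
    · intro j
      have := aux_diag F U lam θ a ha.le hU2 hU (by
        intro i hi
        have hi' : (i : ℕ) < r := (hlpos i).1 (lt_of_le_of_ne (aux_nonneg hG i) (Ne.symm hi))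
        show a * (lam (min i j0))⁻¹ = _
        rw [hmini i hi']) j
      exact sub_nonneg.2 this
    · intro j; ring
    · show -(∑ i : Fin k, if k - t ≤ (i : ℕ) then Real.log (descEig Θ i) else 0)
        + (∑ j : Fin n, (0 : ℝ)) + a * (s : ℝ) - (t : ℝ) =
        (∑ i : Fin n, if (i : ℕ) < t then Real.log (descEig C i) else 0)
        + (t : ℝ) * Real.log ((s : ℝ) / t)
      have has : a * (s : ℝ) = t := div_mul_cancel₀ _ hs0.ne'
      have hCsum : (∑ i : Fin n, if (i : ℕ) < t then Real.log (descEig C i) else 0) =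
          ∑ i : Fin k, if (i : ℕ) < t then Real.log (lam i) else 0 := by
        clear_value lam
        obtain ⟨d, rfl⟩ := Nat.exists_eq_add_of_le hkn
        rw [hfact, aux_append, Fin.sum_univ_add, ← hlam]
        simp
      have hΘsum : (∑ i : Fin k, if k - t ≤ (i : ℕ) then Real.log (descEig Θ i) else 0) =
          ∑ i : Fin k, if (i : ℕ) < t then Real.log a - Real.log (lam i) else 0 := by
        rw [hdΘ, ← Equiv.sum_comp Fin.revPerm]
        refine Finset.sum_congr rfl fun i _ => ?_
        simp only [Fin.revPerm_apply, Fin.rev_rev, Fin.val_rev]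
        by_cases hi : (i : ℕ) < t
        · rw [if_pos (by omega), if_pos hi]
          show Real.log (a * (lam (min i j0))⁻¹) = _
          have hl := (hlpos i).2 (by omega)
          rw [hmini i (by omega), Real.log_mul ha.ne' (inv_ne_zero hl.ne'), Real.log_inv]
          ring
        · rw [if_neg (by omega), if_neg hi]
      have hcnt : (∑ i : Fin k, if (i : ℕ) < t then Real.log a else 0) = t * Real.log a := by
        rw [← Finset.sum_filter, Finset.sum_const, Fin.card_filter_val_lt, min_eq_right (by omega)]
        simp
      have hsplit : (∑ i : Fin k, if (i : ℕ) < t then Real.log a - Real.log (lam i) else 0) =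
          t * Real.log a - ∑ i : Fin k, if (i : ℕ) < t then Real.log (lam i) else 0 := by
        rw [← hcnt, ← Finset.sum_sub_distrib]
        refine Finset.sum_congr rfl fun i _ => ?_
        split_ifs <;> simp
      have hlog : Real.log ((s : ℝ) / t) = - Real.log a := by
        rw [← Real.log_inv]; simp [a]
      rw [hCsum, hΘsum, hsplit, hlog, has, Finset.sum_const_zero]
      ring
  refine ⟨hex, csInf_le ?_ hex⟩
  set c : ℝ := (s : ℝ) / n * lam j0 with hc
  have hcpos : 0 < c := mul_pos (div_pos hs0 hn0) hj0
  refine ⟨t * Real.log (c / t), ?_⟩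
  rintro z ⟨Θ, υ, ν, τ, ⟨hΘ, hυ, hν, hcon⟩, rfl⟩
  show _ ≤ -(∑ i : Fin k, if k - t ≤ (i : ℕ) then Real.log (descEig Θ i) else 0)
        + (∑ j, ν j) + τ * (s : ℝ) - (t : ℝ)
  have hm : 0 < descEig Θ i0 := aux_pos hΘ i0
  have htrc := aux_trace ht htr hrk Θ (F.transpose * F) hΘ hG i0 j0 rfl rfl
  have htr2 : (Θ * (F.transpose * F)).trace = ∑ j, (F * Θ * F.transpose) j j := by
    rw [← Matrix.mul_assoc, Matrix.trace_mul_comm, ← Matrix.mul_assoc]; rfl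
  have hsumle : ∑ j, (F * Θ * F.transpose) j j ≤ (∑ j, ν j) + n * τ := by
    calc ∑ j, (F * Θ * F.transpose) j j ≤ ∑ j, (ν j + τ) :=
          Finset.sum_le_sum fun j _ => by linarith [hcon j, hυ j]
      _ = _ := by rw [Finset.sum_add_distrib]; simp
  have hνs : 0 ≤ ∑ j, ν j := Finset.sum_nonneg fun j _ => hν j
  have hsn1 : (s : ℝ) / n ≤ 1 := (div_le_one hn0).2 (by exact_mod_cast hsn.le)
  have hmain : c * descEig Θ i0 ≤ (∑ j, ν j) + τ * s := by
    have h1 : lam j0 * descEig Θ i0 ≤ (∑ j, ν j) + n * τ := by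
      refine le_trans htrc ?_
      rw [htr2]; exact hsumle
    have h2 := mul_le_mul_of_nonneg_left h1 (div_pos hs0 hn0).le
    have h3 : (s : ℝ) / n * ((∑ j, ν j) + n * τ) = (s : ℝ) / n * (∑ j, ν j) + τ * s := by
      field_simp
    rw [h3] at h2
    have h4 := mul_le_mul_of_nonneg_right hsn1 hνs
    rw [hc, mul_assoc]
    linarith
  have hlogs : (∑ i : Fin k, if k - t ≤ (i : ℕ) then Real.log (descEig Θ i) else 0) ≤
      t * Real.log (descEig Θ i0) := by
    have hcard : (Finset.univ.filter (fun i : Fin k => k - t ≤ (i : ℕ))).card = t := by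
      have : Finset.univ.filter (fun i : Fin k => k - t ≤ (i : ℕ)) = Finset.Ici i0 := by
        ext i; simp [i0, Fin.le_def]
      rw [this, Fin.card_Ici]
      show k - (k - t) = t
      omega
    rw [← Finset.sum_filter]
    calc _ ≤ ∑ i ∈ Finset.univ.filter (fun i : Fin k => k - t ≤ (i : ℕ)),
          Real.log (descEig Θ i0) := by
          refine Finset.sum_le_sum fun i hi => ?_
          refine Real.log_le_log (aux_pos hΘ i) (aux_antitone Θ ?_)
          exact (Finset.mem_filter.1 hi).2
      _ = _ := by rw [Finset.sum_const, hcard]; simp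
  have hlg := Real.log_le_sub_one_of_pos (mul_pos (div_pos hcpos ht0) hm)
  rw [Real.log_mul (div_pos hcpos ht0).ne' hm.ne'] at hlg
  have hlg2 := mul_le_mul_of_nonneg_left hlg ht0.le
  have h5 : (t : ℝ) * (c / t * descEig Θ i0 - 1) = c * descEig Θ i0 - t := by
    field_simp
  rw [h5] at hlg2
  linarith
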